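/- For every Weyl candidate W on Minkowski space V, the left dual equals the right dual: (*W)_{μνλρ} = (W*)_{μνλρ} for all indices. -/

import Mathlib

noncomputable section

/-- Minkowski space `V = ℝ⁴`. -/
abbrev V4 : Type := Fin 4 → ℝ

/-- The Minkowski bilinear form of signature `(-,+,+,+)`. -/
def η (x y : V4) : ℝ := -(x 0 * y 0) + x 1 * y 1 + x 2 * y 2 + x 3 * y 3

/-- The standard basis of `V4`. -/
def e4 (a : Fin 4) : V4 := Pi.single a 1

/-- Components of the Minkowski metric `diag(-1,1,1,1)` (its own inverse). -/
def ηm (a b : Fin 4) : ℝ := if a = b then (if a = (0 : Fin 4) then -1 else 1) else 0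

/-- A 4-linear form on `V4`, given by its components in the standard basis. -/
abbrev T4 : Type := Fin 4 → Fin 4 → Fin 4 → Fin 4 → ℝ

/-- A bilinear form on `V4`, given by its components in the standard basis. -/
abbrev T2 : Type := Fin 4 → Fin 4 → ℝ

/-- Evaluation of a 4-linear form (given by components) on vectors. -/
def eval4 (W : T4) (x y z w : V4) : ℝ :=
  ∑ a : Fin 4, ∑ b : Fin 4, ∑ c : Fin 4, ∑ d : Fin 4, W a b c d * x a * y b * z c * w d

/-- The alternating volume 4-form with `vol(e₀,e₁,e₂,e₃) = 1`. -/
def volv (x y z w : V4) : ℝ := Matrix.det (Matrix.of ![x, y, z, w])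

/-- Components `η_{αβγδ}` of the volume form. -/
def volc (a b c d : Fin 4) : ℝ := volv (e4 a) (e4 b) (e4 c) (e4 d)

/-- Left dual `(*W)_{μνλρ} = ½ η_{μν}{}^{αβ} W_{αβλρ}`. -/
def leftDual (W : T4) : T4 := fun μ ν lam ρ =>
  (1/2) * ∑ γ : Fin 4, ∑ δ : Fin 4, ∑ a : Fin 4, ∑ b : Fin 4,
    volc μ ν γ δ * ηm γ a * ηm δ b * W a b lam ρ

/-- Right dual `(W*)_{μνλρ} = ½ W_{μν}{}^{αβ} η_{αβλρ}`. -/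
def rightDual (W : T4) : T4 := fun μ ν lam ρ =>
  (1/2) * ∑ γ : Fin 4, ∑ δ : Fin 4, ∑ a : Fin 4, ∑ b : Fin 4,
    W μ ν a b * ηm a γ * ηm b δ * volc γ δ lam ρ

/-- A Weyl candidate: pair antisymmetries, pair exchange, first Bianchi, trace-free. -/
def IsWeyl (W : T4) : Prop :=
  (∀ x y z w : V4, eval4 W x y z w = - eval4 W y x z w) ∧
  (∀ x y z w : V4, eval4 W x y z w = - eval4 W x y w z) ∧
  (∀ x y z w : V4, eval4 W x y z w = eval4 W z w x y) ∧
  (∀ x y z w : V4, eval4 W x y z w + eval4 W x z w y + eval4 W x w y z = 0) ∧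
  (∀ x y : V4, ∑ a : Fin 4, ∑ b : Fin 4, ηm a b * eval4 W (e4 a) x (e4 b) y = 0)

/-- Electric part `E(W)_{ab} = W(e_a, n, e_b, n)`. -/
def Epart (W : T4) (n : V4) : T2 := fun a b => eval4 W (e4 a) n (e4 b) n

/-- Magnetic part `B(W)_{ab} = (W*)(e_a, n, e_b, n)`. -/
def Bpart (W : T4) (n : V4) : T2 := fun a b => eval4 (rightDual W) (e4 a) n (e4 b) n

/-- Raise both indices of a bilinear form's components. -/
def up2 (S : T2) : T2 := fun a b => ∑ c : Fin 4, ∑ d : Fin 4, ηm a c * ηm b d * S c d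

/-- Full contraction `S_{ab} T^{ab}`. -/
def contr2 (S T : T2) : ℝ := ∑ a : Fin 4, ∑ b : Fin 4, S a b * up2 T a b

/-!
Five vectors of a four-dimensional space are linearly dependent, which is the Schouten identity for
the volume form. Contracting it with `W` shows that the left dual `*W` satisfies the first Bianchi
identity up to a Ricci term. When the Ricci contraction of `W` is a multiple `c` of the metric, that
term is `c` times the volume form, and the classical derivation of pair exchange from the first
Bianchi identity still goes through because the volume form changes sign under a rotation of its
four arguments. Hence `*W` is symmetric under pair exchange, and exchanging pairs in `*W` turns it
into `W*`.
-/

theorem sum_neg_one_pow_mul_det_succAbove_eq_zero {R : Type*} [CommRing R] {n : ℕ}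
    (v : Fin (n + 1) → Fin n → R) (k : Fin n) :
    ∑ i : Fin (n + 1), (-1) ^ (i : ℕ) * v i k *
      (Matrix.of fun j => v (i.succAbove j)).det = 0 := by
  -- Repeating the `k`-th coordinate of each `v i` gives a square matrix with two equal rows.
  let M : Matrix (Fin (n + 1)) (Fin (n + 1)) R :=
    Matrix.of fun r i => (Fin.cons (v i k) (v i) : Fin (n + 1) → R) r
  have det_eq_zero : M.det = 0 :=
    Matrix.det_zero_of_row_eq (Fin.succ_ne_zero k).symm (by ext i; simp [M])
  rw [Matrix.det_succ_row_zero] at det_eq_zero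
  rw [← det_eq_zero]
  refine Finset.sum_congr rfl fun i _ => ?_
  rw [← Matrix.det_transpose]
  rfl

theorem pair_exchange_of_cyclic_sum {ι A : Type*} [AddCommGroup A] [IsAddTorsionFree A]
    {D B : ι → ι → ι → ι → A}
    (swap_left : ∀ a b c d, D a b c d = -D b a c d)
    (swap_right : ∀ a b c d, D a b c d = -D a b d c)
    (cyclic_sum : ∀ a b c d, D a b c d + D b c a d + D c a b d = B a b c d)
    (rotate : ∀ a b c d, B b c d a = -B a b c d) (a b c d : ι) :
    D a b c d = D c d a b := by
  have cyclic_combination : B a b c d + B b c d a - B c d a b - B d a b c = 0 := by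
    rw [rotate c d a b, rotate b c d a, rotate a b c d]
    abel
  rw [← sub_eq_zero, ← nsmul_eq_zero_iff_right two_ne_zero, ← cyclic_combination]
  simp only [← cyclic_sum]
  rw [swap_right b c d a, swap_right c d b a, swap_left a c d b, swap_right c a d b,
    swap_right d a c b, swap_right a b d c, swap_left b d a c, swap_right d b a c]
  abel

theorem eval4_e4 (W : T4) (a b c d : Fin 4) :
    eval4 W (e4 a) (e4 b) (e4 c) (e4 d) = W a b c d := by
  simp [eval4, e4, Pi.single_apply]

theorem sum_e4_mul (a : Fin 4) (f : Fin 4 → ℝ) : ∑ k, e4 a k * f k = f a := by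
  simp [e4, Pi.single_apply]

theorem volc_eq_detRowAlternating (a b c d : Fin 4) :
    volc a b c d = Matrix.detRowAlternating ![e4 a, e4 b, e4 c, e4 d] :=
  rfl

theorem volc_swap_left (a b c d : Fin 4) : volc a b c d = -volc b a c d := by
  have swapped : ![e4 b, e4 a, e4 c, e4 d] ∘ Equiv.swap 0 1 = ![e4 a, e4 b, e4 c, e4 d] := by
    ext i
    fin_cases i <;> rfl
  rw [volc_eq_detRowAlternating, volc_eq_detRowAlternating, ← swapped,
    AlternatingMap.map_perm, Equiv.Perm.sign_swap Fin.zero_ne_one, Units.neg_smul, one_smul]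

theorem volc_rotate (a b c d : Fin 4) : volc b c d a = -volc a b c d := by
  have rotated : ![e4 a, e4 b, e4 c, e4 d] ∘ finRotate 4 = ![e4 b, e4 c, e4 d, e4 a] := by
    ext i
    fin_cases i <;> rfl
  rw [volc_eq_detRowAlternating, volc_eq_detRowAlternating, ← rotated, AlternatingMap.map_perm,
    sign_finRotate]
  norm_num

theorem volc_pair_exchange (a b c d : Fin 4) : volc a b c d = volc c d a b := by
  rw [volc_rotate b c d a, volc_rotate a b c d, neg_neg]

theorem volc_schouten (a b c d e k : Fin 4) :
    e4 a k * volc b c d e + e4 b k * volc c a d e + e4 c k * volc a b d e =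
      e4 d k * volc a b c e - e4 e k * volc a b c d := by
  let v : Fin 5 → V4 := ![e4 a, e4 b, e4 c, e4 d, e4 e]
  have det_deleted (i : Fin 5) : (Matrix.of fun j => v (i.succAbove j)).det =
      ![volc b c d e, volc a c d e, volc a b d e, volc a b c e, volc a b c d] i := by
    fin_cases i <;>
      exact congrArg (fun w : Fin 4 → V4 => (Matrix.of w).det) (by ext j; fin_cases j <;> rfl)
  have alternating_sum :
      (-1) ^ 0 * e4 a k * volc b c d e + (-1) ^ 1 * e4 b k * volc a c d e +
        (-1) ^ 2 * e4 c k * volc a b d e + (-1) ^ 3 * e4 d k * volc a b c e +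
        (-1) ^ 4 * e4 e k * volc a b c d = 0 := by
    rw [← sum_neg_one_pow_mul_det_succAbove_eq_zero v k]
    simp only [det_deleted]
    rw [Fin.sum_univ_five]
    rfl
  rw [volc_swap_left c a]
  linear_combination alternating_sum

theorem volc_contraction_cyclic_sum (U : Fin 4 → Fin 4 → Fin 4 → ℝ) (μ ν lam : Fin 4) :
    ∑ γ, ∑ δ, volc ν lam γ δ * U γ δ μ + ∑ γ, ∑ δ, volc lam μ γ δ * U γ δ ν +
        ∑ γ, ∑ δ, volc μ ν γ δ * U γ δ lam =
      ∑ δ, volc μ ν lam δ * ∑ k, U k δ k - ∑ γ, volc μ ν lam γ * ∑ k, U γ k k := by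
  calc
    _ = ∑ γ, ∑ δ, ∑ k,
          (e4 μ k * volc ν lam γ δ + e4 ν k * volc lam μ γ δ + e4 lam k * volc μ ν γ δ) *
            U γ δ k := by
      simp only [add_mul, mul_assoc, Finset.sum_add_distrib, sum_e4_mul]
    _ = ∑ γ, ∑ δ, ∑ k, (e4 γ k * volc μ ν lam δ - e4 δ k * volc μ ν lam γ) * U γ δ k := by
      simp only [volc_schouten]
    _ = ∑ γ, ∑ δ, volc μ ν lam δ * U γ δ γ - ∑ γ, ∑ δ, volc μ ν lam γ * U γ δ δ := by
      simp only [sub_mul, mul_assoc, Finset.sum_sub_distrib, sum_e4_mul]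
    _ = _ := by
      rw [Finset.sum_comm (f := fun γ δ => volc μ ν lam δ * U γ δ γ)]
      simp only [Finset.mul_sum]

theorem ηm_comm (a b : Fin 4) : ηm a b = ηm b a := by
  grind [ηm]

theorem sum_ηm_mul_ηm (a c : Fin 4) : ∑ b, ηm a b * ηm b c = if a = c then 1 else 0 := by
  simp only [ηm, ite_mul, zero_mul, Finset.sum_ite_eq, Finset.mem_univ, if_true]
  split_ifs <;> norm_num

/-- The Ricci contraction `Ric_{bd} = η^{ac} W_{abcd}`. -/
def ricci (W : T4) : T2 := fun b d => ∑ a, ∑ c, ηm a c * W a b c d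

/-- The tensor `W^{ab}{}_{cd}`, that is, `W` with its first two indices raised. -/
def raiseLeft (W : T4) : T4 := fun a b c d => ∑ a', ∑ b', ηm a a' * ηm b b' * W a' b' c d

theorem leftDual_eq_sum_raiseLeft (W : T4) (μ ν lam ρ : Fin 4) :
    leftDual W μ ν lam ρ = 1 / 2 * ∑ γ, ∑ δ, volc μ ν γ δ * raiseLeft W γ δ lam ρ := by
  simp only [leftDual, raiseLeft, Finset.mul_sum, mul_assoc]

theorem sum_raiseLeft_first_third (W : T4) (b d : Fin 4) :
    ∑ k, raiseLeft W k b k d = ∑ b', ηm b b' * ricci W b' d := by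
  simp only [raiseLeft, ricci, Finset.mul_sum]
  rw [Finset.sum_congr rfl fun k _ => Finset.sum_comm, Finset.sum_comm]
  refine Finset.sum_congr rfl fun b' _ => ?_
  rw [Finset.sum_comm]
  refine Finset.sum_congr rfl fun a _ => Finset.sum_congr rfl fun k _ => ?_
  rw [ηm_comm]
  ring

theorem leftDual_swap_left (W : T4) (μ ν lam ρ : Fin 4) :
    leftDual W μ ν lam ρ = -leftDual W ν μ lam ρ := by
  simp only [leftDual, volc_swap_left μ ν, neg_mul, Finset.sum_neg_distrib, mul_neg]

section IndexSymmetries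

variable {W : T4}

theorem raiseLeft_swap_left (swap_left : ∀ a b c d, W a b c d = -W b a c d) (a b c d : Fin 4) :
    raiseLeft W a b c d = -raiseLeft W b a c d := by
  simp only [raiseLeft, ← Finset.sum_neg_distrib]
  rw [Finset.sum_comm]
  refine Finset.sum_congr rfl fun b' _ => Finset.sum_congr rfl fun a' _ => ?_
  rw [swap_left a' b']
  ring

theorem leftDual_cyclic_sum (swap_left : ∀ a b c d, W a b c d = -W b a c d)
    (μ ν lam ρ : Fin 4) :
    leftDual W μ ν lam ρ + leftDual W ν lam μ ρ + leftDual W lam μ ν ρ =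
      ∑ δ, volc μ ν lam δ * ∑ b, ηm δ b * ricci W b ρ := by
  have opposite_trace (δ : Fin 4) :
      ∑ k, raiseLeft W δ k k ρ = -∑ k, raiseLeft W k δ k ρ := by
    simp only [raiseLeft_swap_left swap_left δ, Finset.sum_neg_distrib]
  have contracted_schouten :=
    volc_contraction_cyclic_sum (fun γ δ k => raiseLeft W γ δ k ρ) μ ν lam
  simp only [opposite_trace, sum_raiseLeft_first_third, mul_neg, Finset.sum_neg_distrib]
    at contracted_schouten
  simp only [leftDual_eq_sum_raiseLeft]
  linear_combination contracted_schouten / 2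

theorem leftDual_swap_right (swap_right : ∀ a b c d, W a b c d = -W a b d c)
    (μ ν lam ρ : Fin 4) : leftDual W μ ν lam ρ = -leftDual W μ ν ρ lam := by
  simp only [leftDual, swap_right _ _ lam ρ, Finset.sum_neg_distrib, mul_neg]

theorem leftDual_pair_exchange_eq_rightDual (pair_exchange : ∀ a b c d, W a b c d = W c d a b)
    (μ ν lam ρ : Fin 4) : leftDual W lam ρ μ ν = rightDual W μ ν lam ρ := by
  simp only [leftDual, rightDual]
  congr 1
  refine Finset.sum_congr rfl fun γ _ => Finset.sum_congr rfl fun δ _ =>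
    Finset.sum_congr rfl fun a _ => Finset.sum_congr rfl fun b _ => ?_
  rw [volc_pair_exchange lam, pair_exchange a, ηm_comm γ, ηm_comm δ]
  ring

end IndexSymmetries

theorem stmt_7_general {W : T4} {c : ℝ}
    (swap_left : ∀ a b c d, W a b c d = -W b a c d)
    (pair_exchange : ∀ a b c d, W a b c d = W c d a b)
    (einstein : ∀ b d, ricci W b d = c * ηm b d) (μ ν lam ρ : Fin 4) :
    leftDual W μ ν lam ρ = rightDual W μ ν lam ρ := by
  have swap_right (a b c d) : W a b c d = -W a b d c := by
    rw [pair_exchange, swap_left, pair_exchange]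
  have cyclic_sum (a b d e) :
      leftDual W a b d e + leftDual W b d a e + leftDual W d a b e = c * volc a b d e := by
    simp only [leftDual_cyclic_sum swap_left, einstein, mul_left_comm _ c, ← Finset.mul_sum,
      sum_ηm_mul_ηm]
    simp
  have rotate (a b d e) : c * volc b d e a = -(c * volc a b d e) := by
    rw [volc_rotate, mul_neg]
  rw [pair_exchange_of_cyclic_sum (leftDual_swap_left W) (leftDual_swap_right swap_right)
    cyclic_sum rotate, leftDual_pair_exchange_eq_rightDual pair_exchange]

/-- for every Weyl candidate the left dual equals the right dual. -/
theorem stmt_7 (W : T4) (hW : IsWeyl W) :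
    ∀ μ ν lam ρ, leftDual W μ ν lam ρ = rightDual W μ ν lam ρ := by
  obtain ⟨swap_left, -, pair_exchange, -, trace_free⟩ := hW
  refine stmt_7_general (c := 0) ?_ ?_ ?_
  · simpa only [eval4_e4] using fun a b c d => swap_left (e4 a) (e4 b) (e4 c) (e4 d)
  · simpa only [eval4_e4] using fun a b c d => pair_exchange (e4 a) (e4 b) (e4 c) (e4 d)
  · simpa only [eval4_e4, ricci, zero_mul] using fun b d => trace_free (e4 b) (e4 d)
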